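/- There exists an absolute constant c such that for every martingale F in the dyadic Hardy space H_{1/2}(G) and every n ≥ 1, ‖σ_n F‖_{H_{1/2}} ≤ c V(n)^2 ‖F‖_{H_{1/2}}, where σ_n is the n-th Fejér mean of the Walsh–Fourier series and V(n) is the binary variation of n. -/

import Mathlib

open MeasureTheory Filter Topology ENNReal NNReal

noncomputable section

/-- The dyadic group `G = (ℤ/2)^ℕ`. -/
abbrev G : Type := ℕ → ZMod 2

instance : TopologicalSpace (ZMod 2) := ⊥
instance : DiscreteTopology (ZMod 2) := ⟨rfl⟩
instance : MeasurableSpace G := borel G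
instance : BorelSpace G := ⟨rfl⟩

/-- Normalized Haar measure on `G`. -/
def μG : Measure G := Measure.addHaarMeasure ⟨⟨Set.univ, isCompact_univ⟩, by simp⟩

/-- Cylinder `I_n(x) = {y : y_0 = x_0, ..., y_{n-1} = x_{n-1}}`. -/
def cyl (n : ℕ) (x : G) : Set G := {y | ∀ k < n, y k = x k}

/-- `I_n = I_n(0)`. -/
def I₀ (n : ℕ) : Set G := cyl n 0

/-- `e t`: the element of `G` with a single 1 in coordinate `t`. -/
def e (t : ℕ) : G := fun k => if k = t then 1 else 0

/-- Rademacher functions `r_k(x) = (-1)^{x_k}`. -/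
def rade (k : ℕ) (x : G) : ℝ := (-1 : ℝ) ^ (x k).val

/-- Walsh functions `w_n = ∏ r_k^{n_k}` (binary digits `n_k` of `n`). -/
def walsh (n : ℕ) (x : G) : ℝ :=
  ∏ k ∈ Finset.range (n + 1), if n.testBit k then rade k x else 1

/-- Walsh–Dirichlet kernel `D_n = ∑_{k<n} w_k`. -/
def D (n : ℕ) (x : G) : ℝ := ∑ k ∈ Finset.range n, walsh k x

/-- Walsh–Fejér kernel `K_n = (1/n) ∑_{k=1}^n D_k`. -/
def K (n : ℕ) (x : G) : ℝ := (1 / n) * ∑ k ∈ Finset.Icc 1 n, D k x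

/-- Binary variation `V(n) = n_0 + ∑_{k≥1} |n_k - n_{k-1}|`. -/
def V (n : ℕ) : ℕ :=
  (if n.testBit 0 then 1 else 0) +
    ∑ k ∈ Finset.Icc 1 (n + 1), if n.testBit k ≠ n.testBit (k - 1) then 1 else 0

/-- `|n|`: index of the highest nonzero binary digit of `n`. -/
def hi (n : ℕ) : ℕ := Nat.log 2 n

/-- `[n]`: index of the lowest nonzero binary digit of `n`. -/
def lo (n : ℕ) : ℕ := padicValNat 2 n

/-- `d(n) = |n| - [n]`. -/
def dd (n : ℕ) : ℕ := hi n - lo n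

/-- A dyadic martingale: `F n` depends only on the first `n` coordinates, and
`F n` is the average of the two possible extensions, i.e. the martingale property
with respect to the dyadic filtration. -/
def IsDyadicMartingale (F : ℕ → G → ℝ) : Prop :=
  (∀ n x y, (∀ k < n, x k = y k) → F n x = F n y) ∧
  (∀ n x, F n x = (F (n+1) x + F (n+1) (Function.update x n (x n + 1))) / 2)

/-- `k`-th Walsh–Fourier coefficient of a martingale,
`F̂(k) = lim_n ∫ F_n w_k dμ` (the integrals are eventually constant). -/
def mcoeff (F : ℕ → G → ℝ) (k : ℕ) : ℝ := ∫ x, F (k+1) x * walsh k x ∂μG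

/-- Partial sums `S_m F` of the Walsh–Fourier series of a martingale. -/
def S (F : ℕ → G → ℝ) (m : ℕ) (x : G) : ℝ := ∑ j ∈ Finset.range m, mcoeff F j * walsh j x

/-- Fejér means `σ_n F = (1/n) ∑_{k=1}^n S_k F`. -/
def σ (F : ℕ → G → ℝ) (n : ℕ) (x : G) : ℝ := (1 / n) * ∑ k ∈ Finset.Icc 1 n, S F k x

/-- `H_p` quasi-norm of a martingale: `‖sup_n |F_n|‖_{L_p}`. -/
def HpNorm (p : ℝ) (F : ℕ → G → ℝ) : ℝ≥0∞ :=
  (∫⁻ x, (⨆ n, (‖F n x‖₊ : ℝ≥0∞)) ^ p ∂μG) ^ (1 / p)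

/-- Membership in the martingale Hardy space `H_p(G)`. -/
def MemHp (p : ℝ) (F : ℕ → G → ℝ) : Prop := IsDyadicMartingale F ∧ HpNorm p F < ⊤

/-- `L_p` quasi-norm of a function on `G`. -/
def LpN (p : ℝ) (f : G → ℝ) : ℝ≥0∞ := (∫⁻ x, (‖f x‖₊ : ℝ≥0∞) ^ p ∂μG) ^ (1 / p)

/-- Weak `L_p` quasi-norm: `‖f‖_{L_{p,∞}} = sup_{λ>0} λ μ(|f|>λ)^{1/p}`. -/
def wLp (p : ℝ) (f : G → ℝ) : ℝ≥0∞ :=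
  ⨆ t : ℝ≥0, (t : ℝ≥0∞) * (μG {x | (t : ℝ) < |f x|}) ^ (1 / p)

/-- Walsh–Fourier coefficient of an integrable function. -/
def fcoeff (f : G → ℝ) (j : ℕ) : ℝ := ∫ x, f x * walsh j x ∂μG

/-- Partial sums of the Walsh–Fourier series of a function. -/
def Sf (f : G → ℝ) (m : ℕ) (x : G) : ℝ := ∑ j ∈ Finset.range m, fcoeff f j * walsh j x

/-- Fejér means of the Walsh–Fourier series of a function. -/
def σf (f : G → ℝ) (n : ℕ) (x : G) : ℝ := (1 / n) * ∑ k ∈ Finset.Icc 1 n, Sf f k x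

/-- The martingale `(S_{2^m} g)_m` generated by a function `g`; used to interpret the
`H_p` norm of a function such as `σ_n F`. -/
def funMart (g : G → ℝ) : ℕ → G → ℝ := fun m => Sf g (2 ^ m)

/-- Modulus of continuity in `H_p`: `ω_{H_p}(1/2^n, F) = ‖F - S_{2^n} F‖_{H_p}`,
where `F - S_{2^n}F` is the martingale with `m`-th term `F_m - S_{min(2^n, 2^m)}F`. -/
def ωHp (p : ℝ) (n : ℕ) (F : ℕ → G → ℝ) : ℝ≥0∞ :=
  HpNorm p (fun m x => F m x - S F (min (2 ^ n) (2 ^ m)) x)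

/-- The a.e. limit of a martingale (as a limsup, which agrees a.e. with the limit
for martingales in `H_p`). -/
def mLim (F : ℕ → G → ℝ) (x : G) : ℝ := Filter.limsup (fun m => F m x) Filter.atTop

/-- The set `E_l := I_{l+1}(e_{l-1} + e_l)`, with the convention
`I_1(e_{-1}+e_0) = I_2(e_0+e_1)` for `l = 0`. -/
def Eset (l : ℕ) : Set G :=
  if l = 0 then cyl 2 (e 0 + e 1) else cyl (l + 1) (e (l - 1) + e l)

instance : IsProbabilityMeasure μG := ⟨by
  simpa [μG] using Measure.addHaarMeasure_self (G := G)
    (K₀ := ⟨⟨Set.univ, isCompact_univ⟩, by simp⟩)⟩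

instance : μG.IsAddLeftInvariant := by unfold μG; infer_instance

instance : μG.IsAddRightInvariant := by
  refine ⟨fun g => ?_⟩
  simpa only [add_comm] using map_add_left_eq_self μG g

/-- `f` depends only on the first `m` coordinates. -/
def DepOn {α : Type*} (m : ℕ) (f : G → α) : Prop :=
  ∀ x y, (∀ k < m, x k = y k) → f x = f y

theorem DepOn.mono {α : Type*} {m n : ℕ} {f : G → α} (hf : DepOn m f) (h : m ≤ n) :
    DepOn n f := fun x y hxy => hf x y fun k hk => hxy k (hk.trans_le h)

theorem DepOn.continuous {α : Type*} [TopologicalSpace α] {m : ℕ} {f : G → α}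
    (hf : DepOn m f) : Continuous f := by
  have h : f = (fun z : Fin m → ZMod 2 => f fun k => if h : k < m then z ⟨k, h⟩ else 0) ∘
      fun x k => x k := by
    funext x
    refine hf _ _ fun k hk => ?_
    simp [hk]
  rw [h]
  exact continuous_of_discreteTopology.comp (by fun_prop)

theorem DepOn.measurable {α : Type*} [TopologicalSpace α] [MeasurableSpace α] [BorelSpace α]
    {m : ℕ} {f : G → α} (hf : DepOn m f) : Measurable f := hf.continuous.measurable

theorem DepOn.integrable {m : ℕ} {f : G → ℝ} (hf : DepOn m f) : Integrable f μG :=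
  hf.continuous.integrable_of_hasCompactSupport (HasCompactSupport.of_compactSpace f)

theorem DepOn.add_e {α : Type*} {m t : ℕ} {f : G → α} (hf : DepOn m f) (ht : m ≤ t) (x : G) :
    f (x + e t) = f x := by
  refine hf _ _ fun k hk => ?_
  simp [e, (hk.trans_le ht).ne]

theorem DepOn.shift {α : Type*} {m : ℕ} {f : G → α} (hf : DepOn m f) (x : G) :
    DepOn m fun y => f (x + y) := fun y z h => hf _ _ fun k hk => by simp [h k hk]

theorem update_add_one (x : G) (t : ℕ) : Function.update x t (x t + 1) = x + e t := by
  funext k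
  by_cases h : k = t
  · subst h; simp [e]
  · simp [e, h]

theorem rade_add (k : ℕ) (x y : G) : rade k (x + y) = rade k x * rade k y := by
  rw [rade, rade, rade, ← pow_add, Pi.add_apply, ZMod.val_add, ← neg_one_pow_eq_pow_mod_two]

theorem rade_eq (k : ℕ) (x : G) : rade k x = 1 ∨ rade k x = -1 := neg_one_pow_eq_or ℝ _

theorem rade_e (k t : ℕ) : rade k (e t) = if k = t then -1 else 1 := by
  by_cases h : k = t <;> simp [rade, e, h, ZMod.val_one]

theorem walsh_eq_prod {n M : ℕ} (h : n < 2 ^ M) (x : G) :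
    walsh n x = ∏ k ∈ Finset.range M, if n.testBit k then rade k x else 1 := by
  have key : ∀ a b : ℕ, n < 2 ^ a → a ≤ b →
      (∏ k ∈ Finset.range a, if n.testBit k then rade k x else 1) =
        ∏ k ∈ Finset.range b, if n.testBit k then rade k x else 1 := by
    intro a b ha hab
    refine Finset.prod_subset (by simpa using hab) fun k _ hk => ?_
    rw [Nat.testBit_eq_false_of_lt]
    · simp
    · exact ha.trans_le (Nat.pow_le_pow_right two_pos (by simpa using hk))
  rw [walsh]
  rcases le_total (n + 1) M with hM | hM
  · exact key _ _ ((Nat.lt_two_pow_self).trans_le (Nat.pow_le_pow_right two_pos (by omega))) hM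
  · exact (key _ _ h hM).symm

theorem walsh_add (n : ℕ) (x y : G) : walsh n (x + y) = walsh n x * walsh n y := by
  simp only [walsh, ← Finset.prod_mul_distrib]
  refine Finset.prod_congr rfl fun k _ => ?_
  split_ifs <;> simp [rade_add]

theorem walsh_zero (x : G) : walsh 0 x = 1 := by simp [walsh]

theorem walsh_sq (n : ℕ) (x : G) : walsh n x * walsh n x = 1 := by
  rw [walsh, ← Finset.prod_mul_distrib]
  refine Finset.prod_eq_one fun k _ => ?_
  rcases rade_eq k x with h | h <;> split_ifs <;> simp [h]

theorem enorm_walsh (n : ℕ) (x : G) : ‖walsh n x‖ₑ = 1 := by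
  rcases mul_self_eq_one_iff.1 (walsh_sq n x) with h | h <;> simp [h]

theorem walsh_e (n t : ℕ) : walsh n (e t) = if n.testBit t then -1 else 1 := by
  have ht : t ∈ Finset.range (n + t + 1) := by simp
  rw [walsh_eq_prod (M := n + t + 1)
    (Nat.lt_two_pow_self.trans_le (Nat.pow_le_pow_right two_pos (by omega))),
    Finset.prod_eq_single_of_mem t ht fun k _ hk => by simp [rade_e, hk]]
  simp [rade_e]

theorem depOn_walsh {n M : ℕ} (h : n < 2 ^ M) : DepOn M (walsh n) := by
  intro x y hxy
  rw [walsh_eq_prod h, walsh_eq_prod h]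
  refine Finset.prod_congr rfl fun k hk => ?_
  simp [rade, hxy k (by simpa using hk)]

theorem walsh_two_pow_add {m k : ℕ} (h : k < 2 ^ m) (x : G) :
    walsh (2 ^ m + k) x = rade m x * walsh k x := by
  rw [walsh_eq_prod (M := m + 1) (by rw [pow_succ]; omega), walsh_eq_prod h,
    Finset.prod_range_succ, Nat.testBit_two_pow_add_eq, Nat.testBit_eq_false_of_lt h, mul_comm]
  congr 1
  refine Finset.prod_congr rfl fun i hi => ?_
  rw [Nat.testBit_two_pow_add_gt (by simpa using hi)]

theorem walsh_two_pow_sub {m j : ℕ} (h : j < 2 ^ m) (x : G) :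
    walsh (2 ^ m - (j + 1)) x = walsh (2 ^ m - 1) x * walsh j x := by
  rw [walsh_eq_prod (M := m) (by omega), walsh_eq_prod (M := m) (n := 2 ^ m - 1) (by omega),
    walsh_eq_prod h, ← Finset.prod_mul_distrib]
  refine Finset.prod_congr rfl fun i hi => ?_
  have him : i < m := by simpa using hi
  rw [Nat.testBit_two_pow_sub_succ h, Nat.testBit_two_pow_sub_one]
  rcases rade_eq i x with h | h <;> cases j.testBit i <;> simp [him, h]

theorem depOn_sum {ι : Type*} {m : ℕ} {s : Finset ι} {f : ι → G → ℝ}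
    (h : ∀ i ∈ s, DepOn m (f i)) : DepOn m fun x => ∑ i ∈ s, f i x :=
  fun x y hxy => Finset.sum_congr rfl fun i hi => h i hi x y hxy

theorem depOn_D {k m : ℕ} (h : k ≤ 2 ^ m) : DepOn m (D k) :=
  depOn_sum fun _ hi => depOn_walsh ((Finset.mem_range.1 hi).trans_le h)

theorem D_two_pow_add {m k : ℕ} (h : k ≤ 2 ^ m) (x : G) :
    D (2 ^ m + k) x = D (2 ^ m) x + rade m x * D k x := by
  rw [D, Finset.sum_range_add, D, D, Finset.mul_sum]
  congr 1
  exact Finset.sum_congr rfl fun i hi =>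
    walsh_two_pow_add ((Finset.mem_range.1 hi).trans_le h) x

theorem D_two_pow_sub {m k : ℕ} (h : k ≤ 2 ^ m) (x : G) :
    D (2 ^ m - k) x = D (2 ^ m) x - walsh (2 ^ m - 1) x * D k x := by
  induction k with
  | zero => simp [D]
  | succ k ih =>
    have h1 : 2 ^ m - k = 2 ^ m - (k + 1) + 1 := by omega
    have h2 := ih (by omega)
    rw [h1, D, Finset.sum_range_succ, ← D, walsh_two_pow_sub (by omega)] at h2
    rw [show D (k + 1) x = D k x + walsh k x from Finset.sum_range_succ _ _, mul_add]
    linarith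

theorem D_two_pow_succ (m : ℕ) (x : G) :
    D (2 ^ (m + 1)) x = (1 + rade m x) * D (2 ^ m) x := by
  rw [pow_succ, mul_two, D_two_pow_add le_rfl]; ring

/-- The unnormalized Fejér kernel `∑_{k ≤ n} D_k`. -/
def fejerSum (n : ℕ) (x : G) : ℝ := ∑ k ∈ Finset.range (n + 1), D k x

/-- The sum `∑_{k < n} D_k`. -/
def fejerSumLT (n : ℕ) (x : G) : ℝ := ∑ k ∈ Finset.range n, D k x

theorem fejerSum_two_pow_succ (m : ℕ) (x : G) :
    fejerSum (2 ^ (m + 1)) x = (1 + rade m x) * fejerSum (2 ^ m) x + 2 ^ m * D (2 ^ m) x := by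
  have h0 : fejerSum (2 ^ m) x = ∑ k ∈ Finset.range (2 ^ m), D (k + 1) x := by
    rw [fejerSum, Finset.sum_range_succ']; simp [D]
  have h1 : 2 ^ (m + 1) + 1 = (2 ^ m + 1) + 2 ^ m := by ring
  rw [fejerSum, h1, Finset.sum_range_add, ← fejerSum,
    Finset.sum_congr rfl fun k hk => by
      rw [add_assoc, D_two_pow_add (k := 1 + k) (by have := Finset.mem_range.1 hk; omega),
        add_comm 1 k],
    Finset.sum_add_distrib, ← Finset.mul_sum, ← h0]
  simp
  ring

theorem fejerSum_two_pow_sub {m r : ℕ} (h : r ≤ 2 ^ m) (x : G) :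
    fejerSum (2 ^ m - r) x =
      fejerSum (2 ^ m) x - r * D (2 ^ m) x + walsh (2 ^ m - 1) x * fejerSumLT r x := by
  induction r with
  | zero => simp [fejerSumLT]
  | succ r ih =>
    have h1 : 2 ^ m - r = 2 ^ m - (r + 1) + 1 := by omega
    have h2 := ih (by omega)
    rw [h1, fejerSum, Finset.sum_range_succ, ← fejerSum, ← h1,
      D_two_pow_sub (by omega)] at h2
    rw [fejerSumLT, Finset.sum_range_succ, ← fejerSumLT]
    push_cast
    linarith

theorem fejerSumLT_two_pow_sub {m r : ℕ} (h : r ≤ 2 ^ m) (x : G) :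
    fejerSumLT (2 ^ m - r) x =
      fejerSumLT (2 ^ m) x - r * D (2 ^ m) x + walsh (2 ^ m - 1) x * fejerSum r x := by
  induction r with
  | zero => simp [fejerSum, D]
  | succ r ih =>
    have h1 : 2 ^ m - r = 2 ^ m - (r + 1) + 1 := by omega
    have h2 := ih (by omega)
    rw [h1, fejerSumLT, Finset.sum_range_succ, ← fejerSumLT, D_two_pow_sub h] at h2
    rw [fejerSum, Finset.sum_range_succ, ← fejerSum]
    push_cast
    linarith

theorem depOn_fejerSum {n m : ℕ} (h : n ≤ 2 ^ m) : DepOn m (fejerSum n) :=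
  depOn_sum fun _ hi => depOn_D ((Finset.mem_range_succ_iff.1 hi).trans h)

theorem depOn_fejerSumLT {n m : ℕ} (h : n ≤ 2 ^ m) : DepOn m (fejerSumLT n) :=
  depOn_sum fun _ hi => depOn_D ((Finset.mem_range.1 hi).le.trans h)

/-- The integral `∫ |f|^{1/2}`, a subadditive functional. -/
def halfInt (f : G → ℝ) : ℝ≥0∞ := ∫⁻ x, ‖f x‖ₑ ^ (1 / 2 : ℝ) ∂μG

theorem halfInt_add_le {f g : G → ℝ} (hf : Continuous f) :
    halfInt (fun x => f x + g x) ≤ halfInt f + halfInt g := by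
  rw [halfInt, halfInt, halfInt, ← lintegral_add_left (by fun_prop)]
  refine lintegral_mono fun x => ?_
  exact (ENNReal.rpow_le_rpow (enorm_add_le _ _) (by norm_num)).trans
    (ENNReal.rpow_add_le_add_rpow _ _ (by norm_num) (by norm_num))

theorem halfInt_sub_le {f g : G → ℝ} (hf : Continuous f) :
    halfInt (fun x => f x - g x) ≤ halfInt f + halfInt g := by
  have h := halfInt_add_le (g := fun x => -g x) hf
  simpa [halfInt, sub_eq_add_neg] using h

theorem halfInt_const_mul (c : ℝ) {f : G → ℝ} (hf : Continuous f) :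
    halfInt (fun x => c * f x) = ‖c‖ₑ ^ (1 / 2 : ℝ) * halfInt f := by
  rw [halfInt, halfInt, ← lintegral_const_mul _ (by fun_prop)]
  refine lintegral_congr fun x => ?_
  rw [enorm_mul, ENNReal.mul_rpow_of_nonneg _ _ (by norm_num)]

theorem halfInt_walsh_mul (n : ℕ) (f : G → ℝ) :
    halfInt (fun x => walsh n x * f x) = halfInt f := by
  simp [halfInt, enorm_mul, enorm_walsh]

theorem lintegral_add_e (f : G → ℝ≥0∞) (t : ℕ) :
    ∫⁻ x, f (x + e t) ∂μG = ∫⁻ x, f x ∂μG := lintegral_add_right_eq_self f _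

theorem rade_add_e (t : ℕ) (x : G) : rade t (x + e t) = -rade t x := by
  simp [rade_add, rade_e]

/-- Multiplying a function of the first `m` coordinates by `1 + r_m` doubles it on half of
its domain. -/
theorem two_mul_halfInt_one_add_rade {m : ℕ} {f : G → ℝ} (hf : DepOn m f) :
    2 * halfInt (fun x => (1 + rade m x) * f x) = 2 ^ (1 / 2 : ℝ) * halfInt f := by
  have hr : Continuous (rade m) :=
    DepOn.continuous (m := m + 1) fun x y h => by simp [rade, h m (Nat.lt_succ_self m)]
  have hc := hf.continuous
  rw [two_mul]
  nth_rw 1 [halfInt]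
  rw [← lintegral_add_e _ m, halfInt, halfInt, ← lintegral_const_mul _ (by fun_prop),
    ← lintegral_add_right _ (by fun_prop)]
  refine lintegral_congr fun x => ?_
  rw [rade_add_e, hf.add_e le_rfl, ← ENNReal.mul_rpow_of_nonneg _ _ (by norm_num)]
  have h2 : ‖(2 : ℝ)‖ₑ = 2 := by simp [enorm_eq_nnnorm]
  rcases rade_eq m x with h | h <;> norm_num [h, enorm_mul, h2]

theorem sqrt_two_le : (2 : ℝ≥0∞) ^ (1 / 2 : ℝ) ≤ 2 * (3 / 4 : ℝ≥0) := by
  rw [show (2 : ℝ≥0∞) * (3 / 4 : ℝ≥0) = ((3 / 2 : ℝ≥0) : ℝ≥0∞) by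
    rw [← ENNReal.coe_ofNat, ← ENNReal.coe_mul]; norm_num,
    show (2 : ℝ≥0∞) = ((2 : ℝ≥0) : ℝ≥0∞) by norm_num,
    ← ENNReal.coe_rpow_of_nonneg _ (by norm_num), ENNReal.coe_le_coe, ← NNReal.sqrt_eq_rpow,
    NNReal.sqrt_le_iff_le_sq, div_pow, le_div_iff₀ (by norm_num)]
  norm_num

theorem sqrt_two_mul_self : (2 : ℝ≥0∞) ^ (1 / 2 : ℝ) * 2 ^ (1 / 2 : ℝ) = 2 := by
  rw [← ENNReal.rpow_add _ _ (by norm_num) (by norm_num)]; norm_num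

theorem halfInt_one_add_rade_le {m : ℕ} {f : G → ℝ} (hf : DepOn m f) :
    halfInt (fun x => (1 + rade m x) * f x) ≤ (3 / 4 : ℝ≥0) * halfInt f := by
  have h := two_mul_halfInt_one_add_rade hf
  have h2 : 2 * halfInt (fun x => (1 + rade m x) * f x) ≤ 2 * ((3 / 4 : ℝ≥0) * halfInt f) := by
    rw [h, ← mul_assoc]
    gcongr
    exact sqrt_two_le
  exact (ENNReal.mul_le_mul_iff_right (by norm_num) (by norm_num)).1 h2

theorem halfInt_two_pow_mul_D (m : ℕ) : halfInt (fun x => 2 ^ m * D (2 ^ m) x) = 1 := by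
  induction m with
  | zero => simp [halfInt, D, walsh_zero]
  | succ m ih =>
    have hD : DepOn m fun x => (2 : ℝ) ^ m * D (2 ^ m) x := fun x y h => by
      simp only [depOn_D le_rfl x y h]
    have h1 : (fun x => (2 : ℝ) ^ (m + 1) * D (2 ^ (m + 1)) x) =
        fun x => 2 * ((1 + rade m x) * (2 ^ m * D (2 ^ m) x)) := by
      funext x; rw [D_two_pow_succ]; ring
    have hd : DepOn (m + 1) fun x => (1 + rade m x) * (2 ^ m * D (2 ^ m) x) := fun x y h => by
      simp only
      rw [depOn_D le_rfl x y fun k hk => h k (by omega), rade, rade, h m (by omega)]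
    have h2 := two_mul_halfInt_one_add_rade hD
    rw [ih, mul_one] at h2
    rw [h1, halfInt_const_mul _ hd.continuous]
    have h3 : ‖(2 : ℝ)‖ₑ = 2 := by simp [enorm_eq_nnnorm]
    have h4 : (2 : ℝ≥0∞) * (2 ^ (1 / 2 : ℝ) *
        halfInt (fun x => (1 + rade m x) * (2 ^ m * D (2 ^ m) x))) = 2 * 1 := by
      rw [mul_left_comm, h2, sqrt_two_mul_self, mul_one]
    rw [h3]
    exact (ENNReal.mul_right_inj (by norm_num) (by norm_num)).1 h4

theorem halfInt_mul_D_le {m r : ℕ} (h : r ≤ 2 ^ m) :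
    halfInt (fun x => r * D (2 ^ m) x) ≤ 1 := by
  rw [← halfInt_two_pow_mul_D m, halfInt, halfInt]
  refine lintegral_mono fun x => ENNReal.rpow_le_rpow ?_ (by norm_num)
  rw [enorm_mul, enorm_mul]
  gcongr
  rw [enorm_le_iff_norm_le]
  have : (r : ℝ) ≤ 2 ^ m := by exact_mod_cast h
  simpa using this

theorem halfInt_fejerSum_two_pow (m : ℕ) : halfInt (fejerSum (2 ^ m)) ≤ 4 := by
  induction m with
  | zero => simp [halfInt, fejerSum, D, Finset.sum_range_succ, walsh_zero]
  | succ m ih =>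
    rw [funext (fejerSum_two_pow_succ m)]
    have hd : DepOn (m + 1) fun x => (1 + rade m x) * fejerSum (2 ^ m) x := fun x y h => by
      simp only
      rw [depOn_fejerSum le_rfl x y fun k hk => h k (by omega), rade, rade, h m (by omega)]
    calc _ ≤ _ := halfInt_add_le hd.continuous
      _ ≤ (3 / 4 : ℝ≥0) * 4 + 1 := by
        rw [halfInt_two_pow_mul_D]
        gcongr
        exact (halfInt_one_add_rade_le (depOn_fejerSum le_rfl)).trans (by gcongr)
      _ = ((4 : ℝ≥0) : ℝ≥0∞) := by
        rw [← ENNReal.coe_ofNat, ← ENNReal.coe_mul, ← ENNReal.coe_one, ← ENNReal.coe_add]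
        norm_num
      _ = 4 := by norm_num

theorem halfInt_fejerSumLT_two_pow (m : ℕ) : halfInt (fejerSumLT (2 ^ m)) ≤ 5 := by
  have h : fejerSumLT (2 ^ m) = fun x => fejerSum (2 ^ m) x - (1 : ℕ) * D (2 ^ m) x := by
    funext x; simp [fejerSum, fejerSumLT, Finset.sum_range_succ]
  rw [h]
  calc _ ≤ _ := halfInt_sub_le (depOn_fejerSum le_rfl).continuous
    _ ≤ 4 + 1 := add_le_add (halfInt_fejerSum_two_pow m) (halfInt_mul_D_le Nat.one_le_two_pow)
    _ = 5 := by norm_num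

theorem halfInt_fejerSum_two_pow_sub_le {m r : ℕ} (h : r ≤ 2 ^ m) :
    halfInt (fejerSum (2 ^ m - r)) ≤ 6 + halfInt (fejerSumLT r) := by
  rw [funext (fejerSum_two_pow_sub h)]
  have h1 : DepOn m (D (2 ^ m)) := depOn_D le_rfl
  have h2 := (depOn_fejerSum (le_refl (2 ^ m))).continuous
  have h3 := h1.continuous
  calc _ ≤ _ := halfInt_add_le (by fun_prop)
    _ ≤ (4 + 1) + halfInt (fejerSumLT r) := by
      rw [halfInt_walsh_mul]
      gcongr
      exact (halfInt_sub_le h2).trans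
        (add_le_add (halfInt_fejerSum_two_pow m) (halfInt_mul_D_le h))
    _ ≤ _ := by gcongr; norm_num

theorem halfInt_fejerSumLT_two_pow_sub_le {m r : ℕ} (h : r ≤ 2 ^ m) :
    halfInt (fejerSumLT (2 ^ m - r)) ≤ 6 + halfInt (fejerSum r) := by
  rw [funext (fejerSumLT_two_pow_sub h)]
  have h1 : DepOn m (D (2 ^ m)) := depOn_D le_rfl
  have h2 := (depOn_fejerSumLT (le_refl (2 ^ m))).continuous
  have h3 := h1.continuous
  calc _ ≤ _ := halfInt_add_le (by fun_prop)
    _ ≤ (5 + 1) + halfInt (fejerSum r) := by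
      rw [halfInt_walsh_mul]
      gcongr
      exact (halfInt_sub_le h2).trans
        (add_le_add (halfInt_fejerSumLT_two_pow m) (halfInt_mul_D_le h))
    _ = _ := by norm_num

/-- The number of changes among the digits `0, n_0, …, n_{m-1}`. -/
def changes (n : ℕ) : ℕ → ℕ
  | 0 => 0
  | 1 => if n.testBit 0 then 1 else 0
  | m + 2 => changes n (m + 1) + if n.testBit (m + 1) ≠ n.testBit m then 1 else 0

/-- The digit `n_{m-1}`, with `n_{-1} = 0`. -/
def prevBit (n : ℕ) : ℕ → Bool
  | 0 => false
  | m + 1 => n.testBit m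

theorem changes_succ (n m : ℕ) :
    changes n (m + 1) = changes n m + if n.testBit m ≠ prevBit n m then 1 else 0 := by
  cases m with
  | zero => simp [changes, prevBit]
  | succ m => rfl

theorem V_eq_changes (n : ℕ) : V n = changes n (n + 2) := by
  have h : ∀ m, changes n (m + 1) = (if n.testBit 0 then 1 else 0) +
      ∑ k ∈ Finset.Icc 1 m, if n.testBit k ≠ n.testBit (k - 1) then 1 else 0 := by
    intro m
    induction m with
    | zero => simp [changes]
    | succ m ih =>
      rw [Finset.sum_Icc_succ_top (by omega), ← add_assoc, ← ih, changes]
      simp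
  rw [V, h]

theorem halfInt_fejerSum_mod_le (n m : ℕ) :
    halfInt (fejerSum (n % 2 ^ m)) ≤ 6 * (changes n m + (prevBit n m).toNat : ℕ) ∧
    halfInt (fejerSumLT (2 ^ m - n % 2 ^ m)) ≤
      6 * (changes n m + (!prevBit n m).toNat : ℕ) := by
  induction m with
  | zero => simp [Nat.mod_one, halfInt, fejerSum, fejerSumLT, D]
  | succ m ih =>
    obtain ⟨ha, hc⟩ := ih
    have hlt : n % 2 ^ m < 2 ^ m := Nat.mod_lt _ (by positivity)
    have hmod : n % 2 ^ (m + 1) = n % 2 ^ m + 2 ^ m * (n.testBit m).toNat := by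
      rw [Nat.mod_pow_succ, Nat.toNat_testBit]
    have hpow : 2 ^ (m + 1) = 2 ^ m + 2 ^ m := by ring
    have hsix : ∀ k : ℕ, (6 : ℝ≥0∞) * (k + 1 : ℕ) = 6 + 6 * (k : ℕ) := by
      intro k; push_cast; ring
    cases hb : n.testBit m
    · have hr : n % 2 ^ (m + 1) = n % 2 ^ m := by simp [hmod, hb]
      have hch : changes n (m + 1) = changes n m + (prevBit n m).toNat := by
        rw [changes_succ, hb]; cases prevBit n m <;> simp
      rw [hr, hch, prevBit, hb]
      refine ⟨by simpa using ha, ?_⟩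
      rw [Bool.not_false, Bool.toNat_true, hsix]
      exact (halfInt_fejerSumLT_two_pow_sub_le (by omega)).trans (by gcongr)
    · have hr : n % 2 ^ (m + 1) = 2 ^ (m + 1) - (2 ^ m - n % 2 ^ m) := by
        simp [hmod, hb]; omega
      have hr' : 2 ^ (m + 1) - n % 2 ^ (m + 1) = 2 ^ m - n % 2 ^ m := by omega
      have hch : changes n (m + 1) = changes n m + (!prevBit n m).toNat := by
        rw [changes_succ, hb]; cases prevBit n m <;> simp
      rw [hr', hr, hch, prevBit, hb]
      refine ⟨?_, by simpa using hc⟩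
      rw [Bool.toNat_true, hsix]
      exact (halfInt_fejerSum_two_pow_sub_le (by omega)).trans (by gcongr)

theorem halfInt_fejerSum_le (n : ℕ) : halfInt (fejerSum n) ≤ 6 * V n := by
  have hn : n < 2 ^ (n + 1) := Nat.lt_two_pow_self.trans (by simp [pow_succ])
  have h := (halfInt_fejerSum_mod_le n (n + 2)).1
  rwa [Nat.mod_eq_of_lt (hn.trans (by simp [pow_succ])), prevBit,
    Nat.testBit_eq_false_of_lt hn, Bool.toNat_false, add_zero, ← V_eq_changes] at h

theorem one_le_two_pow_mul_measure_cyl (n : ℕ) (x : G) : 1 ≤ 2 ^ n * μG (cyl n x) := by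
  induction n with
  | zero => simp [cyl]
  | succ n ih =>
    have hsub : cyl n x ⊆ cyl (n + 1) x ∪ (fun y => y + e n) ⁻¹' cyl (n + 1) x := by
      intro y hy
      have hlt : ∀ k < n + 1, k ≠ n → y k = x k := fun k hk hne => hy k (by omega)
      by_cases h : y n = x n
      · refine Or.inl fun k hk => ?_
        by_cases hkn : k = n
        · rw [hkn, h]
        · exact hlt k hk hkn
      · refine Or.inr fun k hk => ?_
        by_cases hkn : k = n
        · subst hkn
          have : ∀ a b : ZMod 2, a ≠ b → a + 1 = b := by decide
          simpa [e] using this _ _ h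
        · simpa [e, hkn] using hlt k hk hkn
    have h1 : μG (cyl n x) ≤ 2 * μG (cyl (n + 1) x) := by
      refine (measure_mono hsub).trans ((measure_union_le _ _).trans ?_)
      rw [measure_preimage_add_right, two_mul]
    calc 1 ≤ 2 ^ n * μG (cyl n x) := ih
      _ ≤ 2 ^ n * (2 * μG (cyl (n + 1) x)) := by gcongr
      _ = _ := by ring

/-- A reverse Hölder inequality for functions of finitely many coordinates. -/
theorem lintegral_rpow_half_le {N : ℕ} {h : G → ℝ≥0∞} (hh : DepOn N h) :
    (∫⁻ x, h x ∂μG) ^ (1 / 2 : ℝ) ≤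
      (2 ^ N) ^ (1 / 2 : ℝ) * ∫⁻ x, h x ^ (1 / 2 : ℝ) ∂μG := by
  set J := ∫⁻ x, h x ^ (1 / 2 : ℝ) ∂μG with hJ
  have hm : Measurable h := hh.measurable
  have hsup : ∀ x, h x ^ (1 / 2 : ℝ) ≤ 2 ^ N * J := by
    intro x
    have h1 : h x ^ (1 / 2 : ℝ) * μG (cyl N x) ≤ J := by
      rw [← setLIntegral_const]
      refine le_trans ?_ (setLIntegral_le_lintegral (cyl N x) _)
      refine setLIntegral_mono (by fun_prop) fun y hy => ?_
      rw [hh x y fun k hk => (hy k hk).symm]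
    calc h x ^ (1 / 2 : ℝ) = h x ^ (1 / 2 : ℝ) * 1 := (mul_one _).symm
      _ ≤ h x ^ (1 / 2 : ℝ) * (2 ^ N * μG (cyl N x)) := by
        gcongr; exact one_le_two_pow_mul_measure_cyl N x
      _ = 2 ^ N * (h x ^ (1 / 2 : ℝ) * μG (cyl N x)) := by ring
      _ ≤ _ := by gcongr
  have hle : ∫⁻ x, h x ∂μG ≤ 2 ^ N * (J * J) := by
    calc ∫⁻ x, h x ∂μG = ∫⁻ x, h x ^ (1 / 2 : ℝ) * h x ^ (1 / 2 : ℝ) ∂μG := by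
          refine lintegral_congr fun x => ?_
          rw [← ENNReal.rpow_add_of_nonneg _ _ (by norm_num) (by norm_num)]; norm_num
      _ ≤ ∫⁻ x, (2 ^ N * J) * h x ^ (1 / 2 : ℝ) ∂μG :=
          lintegral_mono fun x => mul_le_mul_left (hsup x) _
      _ = 2 ^ N * (J * J) := by rw [lintegral_const_mul _ (by fun_prop), mul_assoc]
  calc _ ≤ (2 ^ N * (J * J)) ^ (1 / 2 : ℝ) := ENNReal.rpow_le_rpow hle (by norm_num)
    _ = _ := by
      rw [ENNReal.mul_rpow_of_nonneg _ _ (by norm_num),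
        ENNReal.mul_rpow_of_nonneg _ _ (by norm_num),
        ← ENNReal.rpow_add_of_nonneg _ _ (by norm_num) (by norm_num)]
      norm_num

theorem halfInt_conv_le {N : ℕ} {f g : G → ℝ} (hf : DepOn N f) (hg : DepOn N g) :
    halfInt (fun x => ∫ y, f y * g (x + y) ∂μG) ≤
      (2 ^ N) ^ (1 / 2 : ℝ) * (halfInt f * halfInt g) := by
  have hcf := hf.continuous
  have hcg := hg.continuous
  have hmg := hcg.measurable
  have hmeas : Measurable fun p : G × G =>
      ‖f p.2‖ₑ ^ (1 / 2 : ℝ) * ‖g (p.1 + p.2)‖ₑ ^ (1 / 2 : ℝ) := by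
    have h1 : Measurable fun p : G × G => f p.2 := hcf.measurable.comp measurable_snd
    have h2 : Measurable fun p : G × G => g (p.1 + p.2) :=
      hcg.measurable.comp (measurable_fst.add measurable_snd)
    fun_prop
  calc _ ≤ ∫⁻ x, (2 ^ N) ^ (1 / 2 : ℝ) *
        ∫⁻ y, ‖f y‖ₑ ^ (1 / 2 : ℝ) * ‖g (x + y)‖ₑ ^ (1 / 2 : ℝ) ∂μG ∂μG := by
        refine lintegral_mono fun x => ?_
        have hd : DepOn N fun y => ‖f y * g (x + y)‖ₑ := fun y z h => by
          simp only [hf y z h, hg.shift x y z h]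
        refine (ENNReal.rpow_le_rpow (enorm_integral_le_lintegral_enorm _)
          (by norm_num)).trans ((lintegral_rpow_half_le hd).trans_eq ?_)
        congr 1
        refine lintegral_congr fun y => ?_
        rw [enorm_mul, ENNReal.mul_rpow_of_nonneg _ _ (by norm_num)]
    _ = (2 ^ N) ^ (1 / 2 : ℝ) *
        ∫⁻ y, ∫⁻ x, ‖f y‖ₑ ^ (1 / 2 : ℝ) * ‖g (x + y)‖ₑ ^ (1 / 2 : ℝ) ∂μG ∂μG := by
        rw [lintegral_const_mul _ hmeas.lintegral_prod_right',
          lintegral_lintegral_swap hmeas.aemeasurable]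
    _ = _ := by
        congr 1
        rw [halfInt, ← lintegral_mul_const _ (by fun_prop)]
        refine lintegral_congr fun y => ?_
        have hmy : Measurable fun x => ‖g (x + y)‖ₑ ^ (1 / 2 : ℝ) := by
          have : Measurable fun x => g (x + y) := (hcg.comp (continuous_add_const y)).measurable
          fun_prop
        rw [lintegral_const_mul _ hmy,
          lintegral_add_right_eq_self fun x => ‖g x‖ₑ ^ (1 / 2 : ℝ), halfInt]

theorem DepOn.mul {m : ℕ} {f g : G → ℝ} (hf : DepOn m f) (hg : DepOn m g) :
    DepOn m fun x => f x * g x := fun x y h => by simp only [hf x y h, hg x y h]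

theorem integral_walsh_mul_walsh (i j : ℕ) :
    ∫ x, walsh i x * walsh j x ∂μG = if i = j then 1 else 0 := by
  split_ifs with h
  · subst h; simp [walsh_sq]
  · obtain ⟨t, ht⟩ : ∃ t, i.testBit t ≠ j.testBit t := by
      by_contra! hc
      exact h (Nat.eq_of_testBit_eq hc)
    have h1 := integral_add_right_eq_self (μ := μG) (fun x => walsh i x * walsh j x) (e t)
    have h2 : (fun x => walsh i (x + e t) * walsh j (x + e t)) =
        fun x => -(walsh i x * walsh j x) := by
      funext x
      rw [walsh_add, walsh_add, walsh_e, walsh_e]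
      cases hi : i.testBit t <;> cases hj : j.testBit t <;> simp_all
    rw [h2, integral_neg] at h1
    linarith

section Martingale

variable {F : ℕ → G → ℝ}

theorem IsDyadicMartingale.depOn (hF : IsDyadicMartingale F) (n : ℕ) : DepOn n (F n) := hF.1 n

theorem IsDyadicMartingale.integral_mul_eq (hF : IsDyadicMartingale F) {m n : ℕ} {g : G → ℝ}
    (hg : DepOn m g) (h : m ≤ n) : ∫ x, F n x * g x ∂μG = ∫ x, F m x * g x ∂μG := by
  induction n, h using Nat.le_induction with
  | base => rfl
  | succ n hmn ih =>
    have hi : Integrable (fun x => F (n + 1) x * g x) μG :=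
      ((hF.depOn (n + 1)).mul (hg.mono (by omega))).integrable
    have hs := integral_add_right_eq_self (μ := μG) (fun x => F (n + 1) x * g x) (e n)
    have hi' : Integrable (fun x => F (n + 1) (x + e n) * g (x + e n)) μG :=
      hi.comp_add_right (e n)
    rw [← ih]
    have h1 : (fun x => F n x * g x) = fun x =>
        (1 / 2) * (F (n + 1) x * g x + F (n + 1) (x + e n) * g (x + e n)) := by
      funext x
      rw [hF.2 n x, update_add_one, hg.add_e hmn]; ring
    rw [h1, integral_const_mul, integral_add hi hi', hs]
    ring

theorem IsDyadicMartingale.mcoeff_eq (hF : IsDyadicMartingale F) {j N : ℕ} (h : j < 2 ^ N) :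
    mcoeff F j = ∫ x, F N x * walsh j x ∂μG := by
  have hj : j < 2 ^ (j + 1) := Nat.lt_two_pow_self.trans (by simp [pow_succ])
  rw [mcoeff, ← hF.integral_mul_eq (depOn_walsh hj) (le_max_left _ N),
    hF.integral_mul_eq (depOn_walsh h) (le_max_right _ _)]

theorem IsDyadicMartingale.S_eq (hF : IsDyadicMartingale F) {k N : ℕ} (h : k ≤ 2 ^ N) (x : G) :
    S F k x = ∫ y, F N y * D k (x + y) ∂μG := by
  have hlt : ∀ j ∈ Finset.range k, j < 2 ^ N := fun j hj => (Finset.mem_range.1 hj).trans_le h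
  simp only [D, Finset.mul_sum]
  rw [integral_finsetSum _ fun j hj =>
    ((hF.depOn N).mul ((depOn_walsh (hlt j hj)).shift x)).integrable, S]
  refine Finset.sum_congr rfl fun j hj => ?_
  rw [hF.mcoeff_eq (hlt j hj), ← integral_mul_const]
  refine integral_congr_ae (Eventually.of_forall fun y => ?_)
  simp only [walsh_add]
  ring

theorem D_two_pow_eq_zero {m k : ℕ} (hk : k < m) {x : G} (hx : x k ≠ 0) : D (2 ^ m) x = 0 := by
  induction m with
  | zero => omega
  | succ m ih =>
    rw [D_two_pow_succ]
    rcases Nat.lt_succ_iff_lt_or_eq.1 hk with h | h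
    · rw [ih h, mul_zero]
    · subst h
      have : ∀ a : ZMod 2, a ≠ 0 → a = 1 := by decide
      simp [rade, this _ hx, ZMod.val_one]

theorem integral_D_two_pow (m : ℕ) : ∫ x, D (2 ^ m) x ∂μG = 1 := by
  simp only [D]
  rw [integral_finsetSum _ fun j hj => (depOn_walsh (Finset.mem_range.1 hj)).integrable]
  have h : ∀ j, ∫ x, walsh j x ∂μG = if j = 0 then 1 else 0 := fun j => by
    rw [← integral_walsh_mul_walsh j 0]; simp [walsh_zero]
  simp [h]

theorem IsDyadicMartingale.S_two_pow (hF : IsDyadicMartingale F) (m : ℕ) (x : G) :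
    S F (2 ^ m) x = F m x := by
  have h : ∀ y, F m y * D (2 ^ m) (x + y) = F m x * D (2 ^ m) (x + y) := by
    intro y
    by_cases hxy : ∀ k < m, y k = x k
    · rw [hF.1 m y x hxy]
    · push Not at hxy
      obtain ⟨k, hk, hne⟩ := hxy
      have : ∀ a b : ZMod 2, a ≠ b → b + a ≠ 0 := by decide
      rw [D_two_pow_eq_zero hk (this _ _ hne), mul_zero, mul_zero]
  rw [hF.S_eq le_rfl, integral_congr_ae (Eventually.of_forall h), integral_const_mul,
    integral_add_left_eq_self (fun y => D (2 ^ m) y) x, integral_D_two_pow, mul_one]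

theorem depOn_S {k N : ℕ} (h : k ≤ 2 ^ N) : DepOn N (S F k) :=
  depOn_sum fun j hj x y hxy => by
    simp only [depOn_walsh ((Finset.mem_range.1 hj).trans_le h) x y hxy]

/-- The unnormalized Fejér mean `∑_{k=1}^r S_k F`. -/
def sumS (F : ℕ → G → ℝ) (r : ℕ) (x : G) : ℝ := ∑ k ∈ Finset.Icc 1 r, S F k x

theorem depOn_sumS {r N : ℕ} (h : r ≤ 2 ^ N) : DepOn N (sumS F r) :=
  depOn_sum fun _ hk => depOn_S ((Finset.mem_Icc.1 hk).2.trans h)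

theorem fejerSum_eq_sum_Icc (r : ℕ) (x : G) : fejerSum r x = ∑ k ∈ Finset.Icc 1 r, D k x := by
  rw [fejerSum, Finset.sum_range_succ', show D 0 x = 0 by simp [D], add_zero,
    Finset.range_eq_Ico, Finset.sum_Ico_add' (fun k => D k x) 0 r 1]
  rfl

theorem IsDyadicMartingale.sumS_eq (hF : IsDyadicMartingale F) {r N : ℕ} (h : r ≤ 2 ^ N)
    (x : G) : sumS F r x = ∫ y, F N y * fejerSum r (x + y) ∂μG := by
  have hle : ∀ k ∈ Finset.Icc 1 r, k ≤ 2 ^ N := fun k hk => (Finset.mem_Icc.1 hk).2.trans h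
  simp only [fejerSum_eq_sum_Icc, Finset.mul_sum]
  rw [integral_finsetSum _ fun k hk =>
    ((hF.depOn N).mul ((depOn_D (hle k hk)).shift x)).integrable, sumS]
  exact Finset.sum_congr rfl fun k hk => hF.S_eq (hle k hk) x

theorem fcoeff_σ (n j : ℕ) :
    fcoeff (σ F n) j = (1 / n) * ∑ k ∈ Finset.Icc 1 n, if j < k then mcoeff F j else 0 := by
  have hn : n ≤ 2 ^ (n + j) :=
    Nat.lt_two_pow_self.le.trans (Nat.pow_le_pow_right two_pos (by omega))
  have hj : j < 2 ^ (n + j) :=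
    Nat.lt_two_pow_self.trans_le (Nat.pow_le_pow_right two_pos (by omega))
  have h1 : ∀ k ∈ Finset.Icc 1 n,
      ∫ x, S F k x * walsh j x ∂μG = if j < k then mcoeff F j else 0 := by
    intro k hk
    have hi : ∀ i ∈ Finset.range k, i < 2 ^ (n + j) := fun i hi =>
      (Finset.mem_range.1 hi).trans_le ((Finset.mem_Icc.1 hk).2.trans hn)
    simp only [S, Finset.sum_mul, mul_assoc]
    rw [integral_finsetSum _ fun i h =>
      ((depOn_walsh (hi i h)).mul (depOn_walsh hj)).integrable.const_mul _]
    simp [integral_const_mul, integral_walsh_mul_walsh]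
  simp only [fcoeff, σ, mul_assoc, Finset.sum_mul]
  rw [integral_const_mul, integral_finsetSum _ fun k hk =>
    ((depOn_S ((Finset.mem_Icc.1 hk).2.trans hn)).mul (depOn_walsh hj)).integrable,
    Finset.sum_congr rfl h1]

theorem Sf_σ (n M : ℕ) (x : G) :
    Sf (σ F n) M x = (1 / n) * ∑ k ∈ Finset.Icc 1 n, S F (min k M) x := by
  simp only [Sf, fcoeff_σ, mul_assoc, Finset.sum_mul]
  rw [← Finset.mul_sum, Finset.sum_comm]
  congr 1
  refine Finset.sum_congr rfl fun k _ => ?_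
  simp only [ite_mul, zero_mul]
  rw [← Finset.sum_filter, S]
  congr 1
  ext j
  simp [and_comm]

theorem IsDyadicMartingale.funMart_σ_of_lt (hF : IsDyadicMartingale F) {n m : ℕ}
    (h : 2 ^ m < n) (x : G) :
    funMart (σ F n) m x = (1 / n) * sumS F (2 ^ m) x + ((n - 2 ^ m : ℕ) / n) * F m x := by
  have h1 : Finset.Icc 1 n = Finset.Icc 1 (2 ^ m) ∪ Finset.Ioc (2 ^ m) n := by
    ext k; have := Nat.one_le_two_pow (n := m); simp; omega
  have h2 : Disjoint (Finset.Icc 1 (2 ^ m)) (Finset.Ioc (2 ^ m) n) :=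
    Finset.disjoint_left.2 fun k hk hk' => by simp at hk hk'; omega
  rw [funMart, Sf_σ, h1, Finset.sum_union h2, sumS,
    Finset.sum_congr rfl fun k hk => by rw [min_eq_left (Finset.mem_Icc.1 hk).2],
    Finset.sum_congr (s₁ := Finset.Ioc _ _) rfl fun k hk => by
      rw [min_eq_right (Finset.mem_Ioc.1 hk).1.le, hF.S_two_pow]]
  simp
  ring

theorem funMart_σ_of_le {n m : ℕ} (h : n ≤ 2 ^ m) (x : G) :
    funMart (σ F n) m x = (1 / n) * sumS F n x := by
  rw [funMart, Sf_σ, sumS,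
    Finset.sum_congr rfl fun k hk => by rw [min_eq_left ((Finset.mem_Icc.1 hk).2.trans h)]]

/-- The martingale maximal function. -/
def maxFn (F : ℕ → G → ℝ) (x : G) : ℝ≥0∞ := ⨆ m, ‖F m x‖ₑ

theorem IsDyadicMartingale.enorm_funMart_σ_le (hF : IsDyadicMartingale F) {n L : ℕ}
    (hn : n < 2 ^ (L + 1)) (m : ℕ) (x : G) :
    ‖funMart (σ F n) m x‖ₑ ≤ ‖(1 / n) * sumS F n x‖ₑ +
      (∑ i ∈ Finset.range (L + 1), ‖(1 / n) * sumS F (2 ^ i) x‖ₑ + maxFn F x) := by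
  rcases le_or_gt n (2 ^ m) with h | h
  · rw [funMart_σ_of_le h]
    exact le_self_add
  · rw [hF.funMart_σ_of_lt h]
    have hm : m ∈ Finset.range (L + 1) :=
      Finset.mem_range.2 ((Nat.pow_lt_pow_iff_right (by norm_num)).1 (h.trans hn))
    refine le_trans ?_ le_add_self
    refine (enorm_add_le _ _).trans (add_le_add ?_ ?_)
    · exact Finset.single_le_sum (f := fun i => ‖(1 / n) * sumS F (2 ^ i) x‖ₑ)
        (fun _ _ => zero_le) hm
    · refine le_trans ?_ (le_iSup (fun m => ‖F m x‖ₑ) m)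
      rw [enorm_mul]
      refine mul_le_of_le_one_left zero_le ?_
      rw [← enorm_one (G := ℝ), enorm_le_iff_norm_le, norm_one, Real.norm_eq_abs,
        abs_of_nonneg (by positivity)]
      exact div_le_one_of_le₀ (by exact_mod_cast Nat.sub_le _ _) (by positivity)

end Martingale

theorem sum_rpow_half_two_pow_le (L : ℕ) :
    ∑ i ∈ Finset.range (L + 1), ((2 : ℝ≥0∞) ^ i) ^ (1 / 2 : ℝ) ≤ 4 * (2 ^ L) ^ (1 / 2 : ℝ) := by
  induction L with
  | zero => simp
  | succ L ih =>
    set s : ℝ≥0∞ := 2 ^ (1 / 2 : ℝ) with hs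
    have h4 : (4 : ℝ≥0∞) ≤ 3 * s := by
      calc (4 : ℝ≥0∞) = 2 * (s * s) := by rw [hs, sqrt_two_mul_self]; norm_num
        _ ≤ 2 * ((2 * (3 / 4 : ℝ≥0)) * s) := by gcongr; exact sqrt_two_le
        _ = ((2 * (2 * (3 / 4)) : ℝ≥0) : ℝ≥0∞) * s := by push_cast; ring
        _ = ((3 : ℝ≥0) : ℝ≥0∞) * s := by congr 2; rw [← NNReal.coe_inj]; push_cast; norm_num
        _ = 3 * s := by norm_num
    rw [Finset.sum_range_succ, pow_succ, ENNReal.mul_rpow_of_nonneg _ _ (by norm_num), ← hs]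
    set a : ℝ≥0∞ := (2 ^ L) ^ (1 / 2 : ℝ)
    calc _ ≤ 4 * a + a * s := by gcongr
      _ ≤ (3 * s) * a + a * s := by gcongr
      _ = 4 * (a * s) := by ring

theorem enorm_one_div_mul_two_pow_le {n L : ℕ} (hL : 2 ^ L ≤ n) :
    ‖(1 / n : ℝ)‖ₑ * 2 ^ L ≤ 1 := by
  have h2 : (2 : ℝ≥0∞) ^ L = ‖(2 : ℝ) ^ L‖ₑ := by simp [enorm_eq_nnnorm]
  rw [h2, ← enorm_mul, ← enorm_one (G := ℝ), enorm_le_iff_norm_le, norm_one, Real.norm_eq_abs,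
    abs_of_nonneg (by positivity), one_div_mul_eq_div]
  exact div_le_one_of_le₀ (by exact_mod_cast hL) (by positivity)

theorem one_le_V {n : ℕ} (hn : 1 ≤ n) : 1 ≤ V n := by
  by_contra! h
  have hV : changes n (n + 2) = 0 := by rw [← V_eq_changes]; omega
  have key : ∀ m ≤ n + 2, changes n m = 0 ∧ prevBit n m = false := by
    have hmono : Monotone (changes n) := monotone_nat_of_le_succ fun m => by
      rw [changes_succ]; omega
    intro m
    induction m with
    | zero => simp [changes, prevBit]
    | succ m ih =>
      intro hm
      have h0 : changes n (m + 1) = 0 := Nat.le_zero.1 (hV ▸ hmono hm)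
      refine ⟨h0, ?_⟩
      rw [changes_succ, (ih (by omega)).2] at h0
      by_contra hc
      simp only [prevBit] at hc
      simp [hc] at h0
  have hzero : n = 0 := by
    refine Nat.eq_of_testBit_eq fun i => ?_
    rw [Nat.zero_testBit]
    by_cases hi : i < n + 2
    · exact (key (i + 1) hi).2
    · exact Nat.testBit_eq_false_of_lt
        (Nat.lt_two_pow_self.trans_le (Nat.pow_le_pow_right two_pos (by omega)))
  omega

theorem IsDyadicMartingale.lintegral_maxFn_σ_le {F : ℕ → G → ℝ} (hF : IsDyadicMartingale F)
    {n : ℕ} (hn : 1 ≤ n) :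
    ∫⁻ x, maxFn (funMart (σ F n)) x ^ (1 / 2 : ℝ) ∂μG ≤
      29 * V n * ∫⁻ x, maxFn F x ^ (1 / 2 : ℝ) ∂μG := by
  set J := ∫⁻ x, maxFn F x ^ (1 / 2 : ℝ) ∂μG with hJ
  have hFJ : ∀ N, halfInt (F N) ≤ J := fun N => lintegral_mono fun x =>
    ENNReal.rpow_le_rpow (le_iSup (fun m => ‖F m x‖ₑ) N) (by norm_num)
  set L := Nat.log 2 n
  have hL : 2 ^ L ≤ n := Nat.pow_log_le_self 2 (by omega)
  have hL' : n < 2 ^ (L + 1) := Nat.lt_pow_succ_log_self (by norm_num) n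
  have hsum : ∀ {r N : ℕ}, r ≤ 2 ^ N →
      halfInt (sumS F r) ≤ (2 ^ N) ^ (1 / 2 : ℝ) * (J * halfInt (fejerSum r)) := by
    intro r N h
    rw [funext (hF.sumS_eq h)]
    refine (halfInt_conv_le (hF.depOn N) (depOn_fejerSum h)).trans ?_
    gcongr
    exact hFJ N
  set c : ℝ≥0∞ := ‖(1 / n : ℝ)‖ₑ ^ (1 / 2 : ℝ) with hc
  have hcL : c * (2 ^ L) ^ (1 / 2 : ℝ) ≤ 1 := by
    rw [hc, ← ENNReal.mul_rpow_of_nonneg _ _ (by norm_num)]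
    exact ENNReal.rpow_le_one (enorm_one_div_mul_two_pow_le hL) (by norm_num)
  have hs2 : (2 : ℝ≥0∞) ^ (1 / 2 : ℝ) ≤ 2 := by
    conv_rhs => rw [← ENNReal.rpow_one 2]
    exact ENNReal.rpow_le_rpow_of_exponent_le (by norm_num) (by norm_num)
  have hmain : halfInt (fun x => (1 / n) * sumS F n x) ≤ 12 * V n * J := by
    rw [halfInt_const_mul _ (depOn_sumS hL'.le).continuous]
    calc _ ≤ c * ((2 ^ (L + 1)) ^ (1 / 2 : ℝ) * (J * (6 * V n))) := by
          gcongr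
          refine (hsum hL'.le).trans ?_
          gcongr
          exact halfInt_fejerSum_le n
      _ = (c * (2 ^ L) ^ (1 / 2 : ℝ)) * 2 ^ (1 / 2 : ℝ) * (J * (6 * V n)) := by
          rw [pow_succ, ENNReal.mul_rpow_of_nonneg _ _ (by norm_num)]; ring
      _ ≤ 1 * 2 * (J * (6 * V n)) := by gcongr
      _ = 12 * V n * J := by ring
  have hrest : ∑ i ∈ Finset.range (L + 1), halfInt (fun x => (1 / n) * sumS F (2 ^ i) x) ≤
      16 * J := by
    calc _ ≤ ∑ i ∈ Finset.range (L + 1), c * (4 * J) * (2 ^ i) ^ (1 / 2 : ℝ) := by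
          refine Finset.sum_le_sum fun i _ => ?_
          rw [halfInt_const_mul _ (depOn_sumS le_rfl).continuous]
          calc _ ≤ c * ((2 ^ i) ^ (1 / 2 : ℝ) * (J * 4)) := by
                gcongr
                refine (hsum le_rfl).trans ?_
                gcongr
                exact halfInt_fejerSum_two_pow i
            _ = _ := by ring
      _ ≤ c * (4 * J) * (4 * (2 ^ L) ^ (1 / 2 : ℝ)) := by
          rw [← Finset.mul_sum]
          gcongr
          exact sum_rpow_half_two_pow_le L
      _ = (c * (2 ^ L) ^ (1 / 2 : ℝ)) * (16 * J) := by ring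
      _ ≤ 1 * (16 * J) := by gcongr
      _ = 16 * J := one_mul _
  have hmeas : ∀ r, Measurable (sumS F r) := fun r =>
    (depOn_sumS (Nat.lt_two_pow_self.le)).measurable
  have hsub : ∀ a b : ℝ≥0∞, (a + b) ^ (1 / 2 : ℝ) ≤ a ^ (1 / 2 : ℝ) + b ^ (1 / 2 : ℝ) :=
    fun a b => ENNReal.rpow_add_le_add_rpow _ _ (by norm_num) (by norm_num)
  have hsubsum : ∀ (M : ℕ) (a : ℕ → ℝ≥0∞), (∑ i ∈ Finset.range M, a i) ^ (1 / 2 : ℝ) ≤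
      ∑ i ∈ Finset.range M, a i ^ (1 / 2 : ℝ) := by
    intro M a
    induction M with
    | zero => simp
    | succ M ih =>
      rw [Finset.sum_range_succ, Finset.sum_range_succ]
      exact (hsub _ _).trans (by gcongr)
  calc ∫⁻ x, maxFn (funMart (σ F n)) x ^ (1 / 2 : ℝ) ∂μG
      ≤ ∫⁻ x, ‖(1 / n) * sumS F n x‖ₑ ^ (1 / 2 : ℝ) +
          (∑ i ∈ Finset.range (L + 1), ‖(1 / n) * sumS F (2 ^ i) x‖ₑ ^ (1 / 2 : ℝ) +
            maxFn F x ^ (1 / 2 : ℝ)) ∂μG := by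
        refine lintegral_mono fun x => ?_
        refine (ENNReal.rpow_le_rpow (iSup_le fun m => hF.enorm_funMart_σ_le hL' m x)
          (by norm_num)).trans ?_
        refine (hsub _ _).trans (add_le_add le_rfl ?_)
        exact (hsub _ _).trans (add_le_add (hsubsum _ _) le_rfl)
    _ = halfInt (fun x => (1 / n) * sumS F n x) +
          (∑ i ∈ Finset.range (L + 1), halfInt (fun x => (1 / n) * sumS F (2 ^ i) x) + J) := by
        rw [lintegral_add_left (by fun_prop), lintegral_add_left (by fun_prop),
          lintegral_finsetSum _ fun i _ => by fun_prop]
        rfl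
    _ ≤ 12 * V n * J + (16 * J + J) := by gcongr
    _ = (12 * V n + 17 * 1) * J := by ring
    _ ≤ (12 * V n + 17 * V n) * J := by
        gcongr
        exact_mod_cast one_le_V hn
    _ = 29 * V n * J := by ring

/-- `‖σ_n F‖_{H_{1/2}} ≤ c V(n)² ‖F‖_{H_{1/2}}`. -/
theorem fejer_Hp_bound_half :
    ∃ C : ℝ≥0, 0 < C ∧ ∀ F : ℕ → G → ℝ, MemHp (1/2) F → ∀ n : ℕ, 1 ≤ n →
      HpNorm (1/2) (funMart (σ F n)) ≤
        (C : ℝ≥0∞) * (V n : ℝ≥0∞) ^ 2 * HpNorm (1/2) F := by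
  refine ⟨29 ^ 2, by positivity, fun F hF n hn => ?_⟩
  have h : ∀ a : ℝ≥0∞, a ^ (1 / (1 / 2) : ℝ) = a ^ 2 := fun a => by
    rw [← ENNReal.rpow_natCast]; norm_num
  change (∫⁻ x, maxFn (funMart (σ F n)) x ^ (1 / 2 : ℝ) ∂μG) ^ (1 / (1 / 2) : ℝ) ≤
    _ * (∫⁻ x, maxFn F x ^ (1 / 2 : ℝ) ∂μG) ^ (1 / (1 / 2) : ℝ)
  rw [h, h]
  refine (pow_le_pow_left' (hF.1.lintegral_maxFn_σ_le hn) 2).trans_eq ?_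
  push_cast
  ring
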